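/- Let M be a signal and p ∈ AP. Then M, t ⊨ (p ⇒ p U_{(0,+∞)} ⊤) ∧ (¬p ⇒ (¬p) U_{(0,+∞)} ⊤) holds for every t ∈ ℝ≥0 if and only if for every t ∈ ℝ≥0 there exists ε > 0 such that for all t′ with t < t′ < t + ε, p belongs to the first component of M(t′) if and only if p belongs to the first component of M(t). (That is, the formula characterizes exactly the signals whose p-component changes value only over left-closed/right-open intervals: the truth value of p is constant on a right neighbourhood of every point and agrees there with its value at the point.) -/

import Mathlib

/-! The until operator is strict, so `φ U_{(0,+∞)} ⊤` says exactly that `φ` holds on some open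
interval `(t, t + ε)`: the witness `t'` corresponds to `t + ε`, and the right argument `⊤` imposes
nothing there (`sat_untl_zeroInf_topFor`). Hence the formula says that whichever of `p`, `¬p` is
true at `t` stays true on a right neighbourhood of `t`, and the equivalence holds pointwise
in `t`. -/

open scoped NNReal

namespace TAMC

/-! ### Signals and MITL. -/

/-- A signal: a total function `M : ℝ≥0 → ℘(AP) × ℤ^Int`. -/
abbrev Signal (AP V : Type) := ℝ≥0 → Set AP × (V → ℤ)

/-- An MITL interval `⟨a, b⟩` or `⟨a, ∞)` with natural endpoints `a ≤ b`;
each endpoint may be open or closed (`hi = none` means `∞`). -/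
structure MInterval where
  lo : ℕ
  hi : Option ℕ
  loClosed : Bool
  hiClosed : Bool
  lo_le_hi : ∀ b ∈ hi, lo ≤ b

/-- Membership of a nonnegative real in an MITL interval. -/
def MInterval.mem (I : MInterval) (r : ℝ≥0) : Prop :=
  (if I.loClosed then (I.lo : ℝ≥0) ≤ r else (I.lo : ℝ≥0) < r) ∧
  (match I.hi with
   | none => True
   | some b => if I.hiClosed then r ≤ (b : ℝ≥0) else r < (b : ℝ≥0))

/-- MITL formulas `φ ::= p | n < d | n = d | φ ∧ φ | ¬φ | φ U_I φ`. -/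
inductive MITL (AP V : Type) where
  | ap (p : AP)
  | ltA (n : V) (d : ℤ)
  | eqA (n : V) (d : ℤ)
  | and (f g : MITL AP V)
  | not (f : MITL AP V)
  | untl (I : MInterval) (f g : MITL AP V)

/-- MITL satisfaction over signals. -/
def MITL.sat {AP V : Type} (M : Signal AP V) : ℝ≥0 → MITL AP V → Prop
  | t, .ap p => p ∈ (M t).1
  | t, .ltA n d => (M t).2 n < d
  | t, .eqA n d => (M t).2 n = d
  | t, .and f g => f.sat M t ∧ g.sat M t
  | t, .not f => ¬ f.sat M t
  | t, .untl I f g => ∃ t', t < t' ∧ I.mem (t' - t) ∧ g.sat M t' ∧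
      ∀ t'', t < t'' → t'' < t' → f.sat M t''

/-- `φ ∨ ψ`. -/
def MITL.or {AP V : Type} (f g : MITL AP V) : MITL AP V := .not (.and (.not f) (.not g))

/-- `φ ⇒ ψ` abbreviates `¬(φ ∧ ¬ψ)`. -/
def MITL.imp {AP V : Type} (f g : MITL AP V) : MITL AP V := .not (.and f (.not g))

/-- The interval `(0, +∞)`. -/
def MInterval.zeroInf : MInterval :=
  ⟨0, none, false, false, by intro b hb; exact Nat.zero_le b⟩

/-- `⊤` abbreviates `p ∨ ¬p`. -/
def MITL.topFor {AP V : Type} (p : AP) : MITL AP V := .or (.ap p) (.not (.ap p))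

theorem sat_imp {AP V : Type} (M : Signal AP V) (t : ℝ≥0) (f g : MITL AP V) :
    (MITL.imp f g).sat M t ↔ (f.sat M t → g.sat M t) := by
  simp [MITL.imp, MITL.sat]

theorem sat_untl_zeroInf_topFor {AP V : Type} (M : Signal AP V) (t : ℝ≥0) (p : AP)
    (f : MITL AP V) :
    (MITL.untl MInterval.zeroInf f (MITL.topFor p)).sat M t ↔
      ∃ ε : ℝ≥0, 0 < ε ∧ ∀ t', t < t' → t' < t + ε → f.sat M t' := by
  simp only [MITL.sat, MITL.topFor, MITL.or, MInterval.mem, MInterval.zeroInf]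
  constructor
  · rintro ⟨t', ht, -, -, h⟩
    refine ⟨t' - t, tsub_pos_of_lt ht, fun s hs hs' => h s hs ?_⟩
    rwa [add_tsub_cancel_of_le ht.le] at hs'
  · rintro ⟨ε, hε, h⟩
    exact ⟨t + ε, lt_add_of_pos_right t hε, by simpa using hε, by tauto, h⟩

/-- **Statement 10.** The MITL formula
`(p ⇒ p U_{(0,+∞)} ⊤) ∧ (¬p ⇒ (¬p) U_{(0,+∞)} ⊤)` holds at every time instant of a
signal `M` if and only if the truth value of `p` in `M` is constant on a right
neighbourhood of every point and agrees there with its value at the point. -/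
theorem mitl_left_closed_right_open_characterization {AP V : Type}
    (M : Signal AP V) (p : AP) :
    (∀ t : ℝ≥0, MITL.sat M t
        (MITL.and
          (MITL.imp (.ap p) (.untl MInterval.zeroInf (.ap p) (MITL.topFor p)))
          (MITL.imp (.not (.ap p))
            (.untl MInterval.zeroInf (.not (.ap p)) (MITL.topFor p))))) ↔
    (∀ t : ℝ≥0, ∃ ε : ℝ≥0, 0 < ε ∧ ∀ t', t < t' → t' < t + ε →
        (p ∈ (M t').1 ↔ p ∈ (M t).1)) := by
  refine forall_congr' fun t => ?_
  rw [MITL.sat, sat_imp, sat_imp, sat_untl_zeroInf_topFor, sat_untl_zeroInf_topFor]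
  simp only [MITL.sat]
  by_cases hp : p ∈ (M t).1 <;> simp [hp]

end TAMC
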